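/- arXiv:cs/0602075 — 3 statements merged into one kernel-verified Lean document; each statement's English description precedes it below -/
import Mathlib

section
/- Let M be an n×n real matrix that is not a permuted a-Monge matrix. Then there exists a set B of indices with |B| ≤ 4 such that the principal submatrix M[B] is not a permuted a-Monge matrix. -/
/-- A square matrix indexed by a linearly ordered type is a-Monge if
`M i k + M j l ≥ M i l + M j k` whenever `i < j` and `k < l`. -/
def AMonge {ι : Type*} [LinearOrder ι] (M : ι → ι → ℝ) : Prop :=
  ∀ i j k l : ι, i < j → k < l → M i l + M j k ≤ M i k + M j l

/-- A matrix is a permuted a-Monge matrix if some permutation of its index set,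
applied simultaneously to rows and columns, makes it a-Monge. -/
def PermAMonge {ι : Type*} [LinearOrder ι] (M : ι → ι → ℝ) : Prop :=
  ∃ π : Equiv.Perm ι, AMonge (fun i j => M (π i) (π j))

/-- The second difference of `M` in rows `a, b` and columns `c, d`. -/
def crossDiff {ι : Type*} (M : ι → ι → ℝ) (a b c d : ι) : ℝ :=
  M a c + M b d - M a d - M b c

/-- The rank function `r` sorts the principal submatrix of `M` on `T` into a-Monge form;
elements of equal rank are interchangeable. -/
def RanksOn {ι : Type*} (M : ι → ι → ℝ) (r : ι → ℝ) (T : Finset ι) : Prop :=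
  ∀ a ∈ T, ∀ b ∈ T, ∀ c ∈ T, ∀ d ∈ T, r a ≤ r b → r c ≤ r d → 0 ≤ crossDiff M a b c d

/-- The principal submatrix of `M` on `T` can be sorted into a-Monge form. -/
def Rankable {ι : Type*} (M : ι → ι → ℝ) (T : Finset ι) : Prop :=
  ∃ r : ι → ℝ, RanksOn M r T

/-- The preorder on indices determined by the pair `p, q`. -/
def PairLE {ι : Type*} (M : ι → ι → ℝ) (p q a b : ι) : Prop :=
  0 ≤ crossDiff M a b p q ∧ 0 ≤ crossDiff M p q a b

section

variable {ι : Type*} {M : ι → ι → ℝ} {T S : Finset ι} {p q : ι}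

theorem RanksOn.neg {r : ι → ℝ} (h : RanksOn M r T) : RanksOn M (fun x => - r x) T := by
  intro a ha b hb c hc d hd hab hcd
  have := h b hb a ha d hd c hc (by linarith) (by linarith)
  simp only [crossDiff] at *
  linarith

theorem Rankable.exists_le (h : Rankable M T) (a b : ι) :
    ∃ r : ι → ℝ, RanksOn M r T ∧ r a ≤ r b := by
  obtain ⟨r, hr⟩ := h
  rcases le_total (r a) (r b) with hab | hab
  · exact ⟨r, hr, hab⟩
  · exact ⟨_, hr.neg, by simpa using hab⟩

theorem RanksOn.transpose {r : ι → ℝ} (h : RanksOn M r T) :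
    RanksOn (fun a b => M b a) r T := by
  intro a ha b hb c hc d hd hab hcd
  have := h c hc d hd a ha b hb hcd hab
  simp only [crossDiff] at *
  linarith

theorem Rankable.transpose (h : Rankable M T) : Rankable (fun a b => M b a) T :=
  h.imp fun _ => RanksOn.transpose

theorem crossDiff_transpose (a b c d : ι) :
    crossDiff (fun a b => M b a) a b c d = crossDiff M c d a b := by
  simp only [crossDiff]
  ring

theorem crossDiff_swap_swap (a b c d : ι) :
    crossDiff M b a d c = crossDiff M a b c d := by
  simp only [crossDiff]
  ring

theorem PairLE.transpose {a b : ι} (h : PairLE M p q a b) :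
    PairLE (fun a b => M b a) p q a b := by
  simpa only [PairLE, crossDiff_transpose] using h.symm

theorem PairLE.swap {a b : ι} (h : PairLE M p q a b) : PairLE M q p b a :=
  ⟨(crossDiff_swap_swap a b p q).symm ▸ h.1, (crossDiff_swap_swap p q a b).symm ▸ h.2⟩

theorem PairLE.trans {a b c : ι} (h : PairLE M p q a b) (h' : PairLE M p q b c) :
    PairLE M p q a c := by
  simp only [PairLE, crossDiff] at *
  constructor <;> linarith

/-- If `p, q` realise the largest second difference on `T`, then columns which the rows `p, q`
do not separate are not separated by any rows in `T`. -/
theorem RanksOn.crossDiff_nonpos_of_extremal {r : ι → ℝ} (hr : RanksOn M r T)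
    (hp : p ∈ T) (hq : q ∈ T) (hpq : r p ≤ r q)
    (hmax : ∀ u ∈ T, ∀ v ∈ T, crossDiff M u v u v ≤ crossDiff M p q p q)
    {a b c d : ι} (ha : a ∈ T) (hb : b ∈ T) (hc : c ∈ T) (hd : d ∈ T) (hab : r a ≤ r b)
    (h0 : crossDiff M p q a b ≤ 0) : crossDiff M c d a b ≤ 0 := by
  obtain ⟨u, hu, hu'⟩ := T.exists_min_image r ⟨p, hp⟩
  obtain ⟨v, hv, hv'⟩ := T.exists_max_image r ⟨p, hp⟩
  have h1 := hmax u hu v hv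
  have h2 := hr u hu c hc a ha b hb (hu' c hc) hab
  have h3 := hr d hd v hv a ha b hb (hv' d hd) hab
  have h4 := hr u hu p hp u hu a ha (hu' p hp) (hu' a ha)
  have h5 := hr u hu p hp b hb v hv (hu' p hp) (hv' b hb)
  have h6 := hr q hq v hv u hu a ha (hv' q hq) (hu' a ha)
  have h7 := hr q hq v hv b hb v hv (hv' q hq) (hv' b hb)
  have h8 := hr p hp q hq u hu p hp hpq (hu' p hp)
  have h9 := hr p hp q hq q hq v hv hpq (hv' q hq)
  simp only [crossDiff] at *
  linarith

theorem Rankable.crossDiff_nonneg (hT : Rankable M T) (hp : p ∈ T) (hq : q ∈ T)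
    (hmax : ∀ u ∈ T, ∀ v ∈ T, crossDiff M u v u v ≤ crossDiff M p q p q)
    {a b c d : ι} (ha : a ∈ T) (hb : b ∈ T) (hc : c ∈ T) (hd : d ∈ T)
    (hab : PairLE M p q a b) (hcd : PairLE M p q c d) : 0 ≤ crossDiff M a b c d := by
  obtain ⟨r, hr, hpq⟩ := hT.exists_le p q
  rcases le_total (r c) (r d) with h | h
  · rcases le_total (r a) (r b) with h' | h'
    · exact hr a ha b hb c hc d hd h' h
    · have := hr.transpose.crossDiff_nonpos_of_extremal hp hq hpq
        (by simpa only [crossDiff_transpose] using hmax) hb ha hc hd h'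
        (by have := hab.1; simp only [crossDiff] at *; linarith)
      simp only [crossDiff] at *
      linarith
  · have := hr.crossDiff_nonpos_of_extremal hp hq hpq hmax hd hc ha hb h
      (by have := hcd.2; simp only [crossDiff] at *; linarith)
    simp only [crossDiff] at *
    linarith

variable [DecidableEq ι]

/-- All principal submatrices of size at most four within `S` are rankable, and `p, q` realise the
largest second difference on `S`. -/
structure ExtremalPair (M : ι → ι → ℝ) (S : Finset ι) (p q : ι) : Prop where
  left_mem : p ∈ S
  right_mem : q ∈ S
  rankable : ∀ a ∈ S, ∀ b ∈ S, ∀ c ∈ S, ∀ d ∈ S, Rankable M {a, b, c, d}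
  le_max : ∀ u ∈ S, ∀ v ∈ S, crossDiff M u v u v ≤ crossDiff M p q p q

namespace ExtremalPair

theorem transpose (h : ExtremalPair M S p q) : ExtremalPair (fun a b => M b a) S p q where
  left_mem := h.left_mem
  right_mem := h.right_mem
  rankable a ha b hb c hc d hd := (h.rankable a ha b hb c hc d hd).transpose
  le_max := by simpa only [crossDiff_transpose] using h.le_max

theorem swap (h : ExtremalPair M S p q) : ExtremalPair M S q p where
  left_mem := h.right_mem
  right_mem := h.left_mem
  rankable := h.rankable
  le_max u hu v hv := (h.le_max u hu v hv).trans_eq (crossDiff_swap_swap q p q p)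

theorem crossDiff_nonneg_of_mem (h : ExtremalPair M S p q) {x y a b c d : ι}
    (hx : x ∈ S) (hy : y ∈ S) (ha : a ∈ ({p, q, x, y} : Finset ι))
    (hb : b ∈ ({p, q, x, y} : Finset ι)) (hc : c ∈ ({p, q, x, y} : Finset ι))
    (hd : d ∈ ({p, q, x, y} : Finset ι)) (hab : PairLE M p q a b) (hcd : PairLE M p q c d) :
    0 ≤ crossDiff M a b c d := by
  have hsub : ({p, q, x, y} : Finset ι) ⊆ S := by
    simp [Finset.insert_subset_iff, h.left_mem, h.right_mem, hx, hy]
  exact (h.rankable p h.left_mem q h.right_mem x hx y hy).crossDiff_nonneg (by simp) (by simp)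
    (fun u hu v hv => h.le_max u (hsub hu) v (hsub hv)) ha hb hc hd hab hcd

theorem pairLE_total (h : ExtremalPair M S p q) {x y : ι} (hx : x ∈ S) (hy : y ∈ S) :
    PairLE M p q x y ∨ PairLE M p q y x := by
  obtain ⟨r, hr, hpq⟩ := (h.rankable p h.left_mem q h.right_mem x hx y hy).exists_le p q
  rcases le_total (r x) (r y) with hxy | hxy
  · exact Or.inl ⟨hr x (by simp) y (by simp) p (by simp) q (by simp) hxy hpq,
      hr p (by simp) q (by simp) x (by simp) y (by simp) hpq hxy⟩
  · exact Or.inr ⟨hr y (by simp) x (by simp) p (by simp) q (by simp) hxy hpq,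
      hr p (by simp) q (by simp) y (by simp) x (by simp) hpq hxy⟩

theorem pairLE_left (h : ExtremalPair M S p q) {x : ι} (hx : x ∈ S) : PairLE M p q p x := by
  obtain ⟨r, hr, hpq⟩ := (h.rankable p h.left_mem q h.right_mem x hx x hx).exists_le p q
  have h1 := h.le_max x hx q h.right_mem
  rcases le_total (r p) (r x) with hx' | hx'
  · exact ⟨hr p (by simp) x (by simp) p (by simp) q (by simp) hx' hpq,
      hr p (by simp) q (by simp) p (by simp) x (by simp) hpq hx'⟩
  · have h2 := hr x (by simp) p (by simp) x (by simp) p (by simp) hx' hx'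
    have h3 := hr x (by simp) p (by simp) p (by simp) q (by simp) hx' hpq
    have h4 := hr p (by simp) q (by simp) x (by simp) p (by simp) hpq hx'
    simp only [PairLE, crossDiff] at *
    constructor <;> linarith

theorem pairLE_right (h : ExtremalPair M S p q) {x : ι} (hx : x ∈ S) : PairLE M p q x q :=
  (h.swap.pairLE_left hx).swap

theorem crossDiff_left_rows_nonneg (h : ExtremalPair M S p q) {x k l : ι} (hx : x ∈ S)
    (hk : k ∈ S) (hl : l ∈ S) (hkl : PairLE M p q k l) : 0 ≤ crossDiff M p x k l := by
  have hp := h.left_mem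
  have hq := h.right_mem
  have hpx := h.pairLE_left hx
  have hpk := h.pairLE_left hk
  have hxq := h.pairLE_right hx
  by_contra! hneg
  have hpq := hkl.2
  rcases h.pairLE_total hx hk with hxk | hkx
  · have h1 := h.crossDiff_nonneg_of_mem hx hl (a := p) (b := x) (c := x) (d := l)
      (by simp) (by simp) (by simp) (by simp) hpx (hxk.trans hkl)
    have h2 := h.crossDiff_nonneg_of_mem hk hl (a := p) (b := k) (c := k) (d := l)
      (by simp) (by simp) (by simp) (by simp) hpk hkl
    obtain ⟨r, hr, hkl'⟩ := (h.rankable p hp x hx k hk l hl).exists_le k l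
    have hxp : r x < r p := by
      by_contra! hc
      have := hr p (by simp) x (by simp) k (by simp) l (by simp) hc hkl'
      linarith
    have hkx' : r k < r x := by
      by_contra! hc
      have := hr x (by simp) p (by simp) x (by simp) k (by simp) hxp.le hc
      simp only [crossDiff] at *
      linarith
    have := hr k (by simp) x (by simp) k (by simp) l (by simp) hkx'.le hkl'
    simp only [crossDiff] at *
    linarith
  rcases h.pairLE_total hx hl with hxl | hlx
  · have h1 := h.crossDiff_nonneg_of_mem hx hl (a := p) (b := x) (c := x) (d := l)
      (by simp) (by simp) (by simp) (by simp) hpx hxl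
    have h2 := h.crossDiff_nonneg_of_mem hx hk (a := p) (b := x) (c := k) (d := x)
      (by simp) (by simp) (by simp) (by simp) hpx hkx
    simp only [crossDiff] at *
    linarith
  have h1 := h.crossDiff_nonneg_of_mem hx hk (a := p) (b := x) (c := k) (d := x)
    (by simp) (by simp) (by simp) (by simp) hpx hkx
  have h2 := h.crossDiff_nonneg_of_mem hk hl (a := p) (b := k) (c := k) (d := l)
    (by simp) (by simp) (by simp) (by simp) hpk hkl
  have h3 := h.crossDiff_nonneg_of_mem hx hl (a := p) (b := x) (c := p) (d := l)
    (by simp) (by simp) (by simp) (by simp) hpx (hpk.trans hkl)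
  have hneg' : crossDiff M k x k l < 0 := by
    obtain ⟨r, hr, hkl'⟩ := (h.rankable p hp x hx k hk l hl).exists_le k l
    have hxp : r x < r p := by
      by_contra! hc
      have := hr p (by simp) x (by simp) k (by simp) l (by simp) hc hkl'
      linarith
    have hkp : r k ≤ r p := by
      rcases le_total (r l) (r p) with hlp | hpl
      · exact hkl'.trans hlp
      by_contra! hc
      have h4 := hr x (by simp) p (by simp) p (by simp) l (by simp) hxp.le hpl
      have h5 := hr x (by simp) p (by simp) p (by simp) k (by simp) hxp.le hc.le
      simp only [crossDiff] at *
      linarith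
    have := hr k (by simp) p (by simp) k (by simp) l (by simp) hkp hkl'
    simp only [crossDiff] at *
    linarith
  obtain ⟨r, hr, hkl'⟩ := (h.rankable q hq x hx k hk l hl).exists_le k l
  have hxk' : r x < r k := by
    by_contra! hc
    have := hr k (by simp) x (by simp) k (by simp) l (by simp) hc hkl'
    linarith
  have hxq' : r x < r q := by
    by_contra! hc
    have := hr q (by simp) x (by simp) k (by simp) l (by simp) hc hkl'
    simp only [crossDiff] at *
    linarith
  have h4 := h.crossDiff_nonneg_of_mem hx hl (a := x) (b := q) (c := l) (d := x)
    (by simp) (by simp) (by simp) (by simp) hxq hlx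
  have h5 := hr x (by simp) q (by simp) x (by simp) k (by simp) hxq'.le hxk'.le
  simp only [crossDiff] at *
  linarith

theorem crossDiff_left_cols_nonneg (h : ExtremalPair M S p q) {x k l : ι} (hx : x ∈ S)
    (hk : k ∈ S) (hl : l ∈ S) (hkl : PairLE M p q k l) : 0 ≤ crossDiff M k l p x := by
  simpa only [crossDiff_transpose] using
    h.transpose.crossDiff_left_rows_nonneg hx hk hl hkl.transpose

theorem crossDiff_nonneg_of_rankable_insert (h : ExtremalPair M S p q) {i j k l : ι}
    (hi : i ∈ S) (hj : j ∈ S) (hk : k ∈ S) (hl : l ∈ S)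
    (hT : Rankable M {p, i, j, k, l}) (hij : PairLE M p q i j) (hkl : PairLE M p q k l) :
    0 ≤ crossDiff M i j k l := by
  by_contra! hneg
  have h1 := h.crossDiff_left_cols_nonneg hl hi hj hij
  have h2 := h.crossDiff_left_rows_nonneg hj hk hl hkl
  have h3 := h.crossDiff_left_rows_nonneg hi h.left_mem hk (h.pairLE_left hk)
  obtain ⟨r, hr, hij'⟩ := hT.exists_le i j
  have hpk : r p < r k := by
    by_contra! hc
    have := hr i (by simp) j (by simp) k (by simp) p (by simp) hij' hc
    simp only [crossDiff] at *
    linarith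
  have hlk : r l < r k := by
    by_contra! hc
    have := hr i (by simp) j (by simp) k (by simp) l (by simp) hij' hc
    linarith
  have hip : r i < r p := by
    by_contra! hc
    have := hr p (by simp) i (by simp) l (by simp) k (by simp) hc hlk.le
    simp only [crossDiff] at *
    linarith
  have h4 := hr i (by simp) p (by simp) p (by simp) k (by simp) hip.le hpk.le
  have hlp : r l < r p := by
    by_contra! hc
    have := hr i (by simp) p (by simp) p (by simp) l (by simp) hip.le hc
    simp only [crossDiff] at *
    linarith
  have hpj : r p < r j := by
    by_contra! hc
    have := hr j (by simp) p (by simp) p (by simp) k (by simp) hc hpk.le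
    simp only [crossDiff] at *
    linarith
  have h5 := hr p (by simp) j (by simp) l (by simp) p (by simp) hpj.le hlp.le
  simp only [crossDiff] at *
  linarith

theorem rankable_of_ssubset (h : ExtremalPair M S p q) (hpq : p ≠ q)
    (hS : ∀ T ⊂ S, Rankable M T) : Rankable M S := by
  have hp := h.left_mem
  have hq := h.right_mem
  refine ⟨fun x => crossDiff M p x p q + crossDiff M p q p x,
    fun i hi j hj k hk l hl hij hkl => ?_⟩
  have pairLE_of_le : ∀ x ∈ S, ∀ y ∈ S,
      crossDiff M p x p q + crossDiff M p q p x ≤ crossDiff M p y p q + crossDiff M p q p y →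
      PairLE M p q x y := by
    intro x hx y hy hxy
    rcases h.pairLE_total hx hy with h' | h'
    · exact h'
    · simp only [PairLE, crossDiff] at *
      constructor <;> linarith
  have hij' := pairLE_of_le i hi j hj hij
  have hkl' := pairLE_of_le k hk l hl hkl
  have rankable_insert : ∀ u ∈ S, ∀ v ∈ S, u ≠ v → v ∉ ({i, j, k, l} : Finset ι) →
      Rankable M {u, i, j, k, l} := by
    intro u hu v hv huv hv'
    refine hS _ ((Finset.ssubset_iff_of_subset ?_).2 ⟨v, hv, ?_⟩)
    · simp [Finset.insert_subset_iff, hu, hi, hj, hk, hl]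
    · rw [Finset.mem_insert]
      exact not_or.2 ⟨huv.symm, hv'⟩
  by_cases hq' : q ∈ ({i, j, k, l} : Finset ι)
  · by_cases hp' : p ∈ ({i, j, k, l} : Finset ι)
    · have hsub : ({i, j, k, l} : Finset ι) ⊆ S := by
        simp [Finset.insert_subset_iff, hi, hj, hk, hl]
      exact (h.rankable i hi j hj k hk l hl).crossDiff_nonneg hp' hq'
        (fun u hu v hv => h.le_max u (hsub hu) v (hsub hv))
        (by simp) (by simp) (by simp) (by simp) hij' hkl'
    · rw [← crossDiff_swap_swap]
      refine h.swap.crossDiff_nonneg_of_rankable_insert hj hi hl hk ?_ hij'.swap hkl'.swap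
      convert rankable_insert q hq p hp hpq.symm hp' using 1
      grind
  · exact h.crossDiff_nonneg_of_rankable_insert hi hj hk hl
      (rankable_insert p hp q hq hpq hq') hij' hkl'

end ExtremalPair

theorem rankable_of_card_le_four (h : ∀ T : Finset ι, T.card ≤ 4 → Rankable M T)
    (S : Finset ι) : Rankable M S := by
  induction S using Finset.strongInduction with
  | H S ih =>
    by_cases hS : S.card ≤ 4
    · exact h S hS
    have hne : S.offDiag.Nonempty := by
      obtain ⟨a, ha, b, hb, hab⟩ := Finset.one_lt_card.1 (show 1 < S.card by omega)
      exact ⟨(a, b), Finset.mem_offDiag.2 ⟨ha, hb, hab⟩⟩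
    obtain ⟨⟨p, q⟩, hpq, hmax⟩ :=
      S.offDiag.exists_max_image (fun x => crossDiff M x.1 x.2 x.1 x.2) hne
    obtain ⟨hp, hq, hne'⟩ := Finset.mem_offDiag.1 hpq
    refine ExtremalPair.rankable_of_ssubset
      ⟨hp, hq, fun a _ b _ c _ d _ => h _ Finset.card_le_four, fun u hu v hv => ?_⟩ hne' ih
    by_cases huv : u = v
    · subst huv
      obtain ⟨r, hr, hle⟩ :=
        (h {p, q} (Finset.card_le_two.trans (by norm_num))).exists_le p q
      have := hr p (by simp) q (by simp) p (by simp) q (by simp) hle hle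
      simp only [crossDiff] at *
      linarith
    · exact hmax (u, v) (Finset.mem_offDiag.2 ⟨hu, hv, huv⟩)

end

theorem PermAMonge.rankable {n : ℕ} {M : Fin n → Fin n → ℝ} {B : Finset (Fin n)}
    (h : PermAMonge (fun i j : ↥B => M i.1 j.1)) : Rankable M B := by
  obtain ⟨π, hπ⟩ := h
  refine ⟨fun x => if hx : x ∈ B then ((π.symm ⟨x, hx⟩).1.val : ℝ) else 0, ?_⟩
  intro a ha b hb c hc d hd hab hcd
  simp only [ha, hb, hc, hd, dif_pos, Nat.cast_le, Fin.val_fin_le, Subtype.coe_le_coe] at hab hcd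
  rcases hab.eq_or_lt with hab | hab
  · have : a = b := by simpa using hab
    simp [crossDiff, this]
  rcases hcd.eq_or_lt with hcd | hcd
  · have : c = d := by simpa using hcd
    simp [crossDiff, this]
  have := hπ _ _ _ _ hab hcd
  simp only [Equiv.apply_symm_apply] at this
  simp only [crossDiff]
  linarith

theorem Rankable.permAMonge {n : ℕ} {M : Fin n → Fin n → ℝ} (h : Rankable M Finset.univ) :
    PermAMonge M := by
  obtain ⟨r, hr⟩ := h
  refine ⟨Tuple.sort r, fun i j k l hij hkl => ?_⟩
  have := hr _ (Finset.mem_univ _) _ (Finset.mem_univ _) _ (Finset.mem_univ _) _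
    (Finset.mem_univ _) (Tuple.monotone_sort r hij.le) (Tuple.monotone_sort r hkl.le)
  simp only [crossDiff] at this
  linarith

/-- If an `n × n` real matrix is not a permuted a-Monge matrix,
then it has a principal submatrix of size at most `4` that is not a permuted
a-Monge matrix. -/
theorem not_permuted_aMonge_small_submatrix
    {n : ℕ} (M : Fin n → Fin n → ℝ) (h : ¬ PermAMonge M) :
    ∃ B : Finset (Fin n), B.card ≤ 4 ∧
      ¬ PermAMonge (fun i j : ↥B => M i.1 j.1) := by
  by_contra! hB
  exact h (rankable_of_card_le_four (fun T hT => (hB T hT).rankable) Finset.univ).permAMonge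
end

section
/- Let U = {M_1,…,M_m} be a set of n×n real matrices such that no permutation of {0,…,n−1} is simultaneously an a-Monge permutation for all matrices in U. Then there exists a subset U' ⊆ U with |U'| ≤ 3 such that no permutation of {0,…,n−1} is simultaneously an a-Monge permutation for all matrices in U'. -/
/-- The second difference of `M` along the row pair `(x, y)` and the column pair `(z, w)`. -/
def secondDiff {α : Type*} (M : α → α → ℝ) (x y z w : α) : ℝ :=
  M x z + M y w - M x w - M y z

/-- The ranking `p` makes `M` an a-Monge matrix. -/
def RankMonge {α ι : Type*} [LinearOrder ι] (M : α → α → ℝ) (p : α → ι) : Prop :=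
  ∀ x y z w : α, p x < p y → p z < p w → 0 ≤ secondDiff M x y z w

/-- The indices `x` and `y` are separated by a nonzero second difference of `M`,
either as rows or as columns. -/
def Separated {α : Type*} (M : α → α → ℝ) (x y : α) : Prop :=
  ∃ z w : α, secondDiff M x y z w ≠ 0 ∨ secondDiff M z w x y ≠ 0

lemma aMonge_perm_iff {n : ℕ} (M : Fin n → Fin n → ℝ) (π : Equiv.Perm (Fin n)) :
    AMonge (fun a b => M (π a) (π b)) ↔ RankMonge M π.symm := by
  constructor
  · intro h x y z w hxy hzw
    have := h _ _ _ _ hxy hzw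
    simp only [Equiv.apply_symm_apply] at this
    unfold secondDiff
    linarith
  · intro h i j k l hij hkl
    have := h (π i) (π j) (π k) (π l) (by simpa using hij) (by simpa using hkl)
    unfold secondDiff at this
    linarith

section Ranking

variable {α ι : Type*} [LinearOrder ι] {M : α → α → ℝ} {p q : α → ι}

lemma RankMonge.transpose (h : RankMonge M p) : RankMonge (fun x y => M y x) p := by
  intro x y z w hxy hzw
  have := h z w x y hzw hxy
  unfold secondDiff at *
  linarith

lemma Separated.symm {x y : α} (h : Separated M x y) : Separated M y x := by
  obtain ⟨z, w, h⟩ := h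
  refine ⟨z, w, h.imp (fun h h' => h ?_) (fun h h' => h ?_)⟩ <;>
  · unfold secondDiff at *
    linarith

lemma Separated.ne {x y : α} (h : Separated M x y) : x ≠ y := by
  rintro rfl
  obtain ⟨z, w, h | h⟩ := h <;> exact h (by unfold secondDiff; ring)

/-- Two rankings that make `M` a-Monge agree on a row pair iff they agree on
a column pair, when the corresponding second difference is nonzero. -/
lemma RankMonge.agree_iff (hp : RankMonge M p) (hq : RankMonge M q)
    (hpi : p.Injective) (hqi : q.Injective) {x y z w : α}
    (h : secondDiff M x y z w ≠ 0) :
    ((p x < p y ↔ q x < q y) ↔ (p z < p w ↔ q z < q w)) := by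
  have hxy : x ≠ y := by
    rintro rfl
    exact h (by unfold secondDiff; ring)
  have hzw : z ≠ w := by
    rintro rfl
    exact h (by unfold secondDiff; ring)
  have key : ∀ r : α → ι, RankMonge M r → r.Injective →
      ((r x < r y ↔ r z < r w) ↔ 0 < secondDiff M x y z w) := by
    intro r hr hri
    have h1 := hr x y z w
    have h2 := hr x y w z
    have h3 := hr y x z w
    have h4 := hr y x w z
    have e2 : secondDiff M x y w z = -secondDiff M x y z w := by unfold secondDiff; ring
    have e3 : secondDiff M y x z w = -secondDiff M x y z w := by unfold secondDiff; ring
    have e4 : secondDiff M y x w z = secondDiff M x y z w := by unfold secondDiff; ring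
    rw [e2] at h2
    rw [e3] at h3
    rw [e4] at h4
    rcases lt_or_gt_of_ne (hri.ne hxy) with a | a <;>
    rcases lt_or_gt_of_ne (hri.ne hzw) with b | b <;>
    rcases lt_or_gt_of_ne h with c | c <;>
    simp_all [not_lt_of_gt] <;> linarith
  have kp := key p hp hpi
  have kq := key q hq hqi
  tauto

/-- Enlarging the row interval does not decrease a second difference. -/
lemma RankMonge.secondDiff_le (hp : RankMonge M p) (hpi : p.Injective) {x y x' y' z w : α}
    (hx : p x' ≤ p x) (hy : p y ≤ p y') (hzw : p z < p w) :
    secondDiff M x y z w ≤ secondDiff M x' y' z w := by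
  have h1 : 0 ≤ secondDiff M x' x z w := by
    rcases hx.lt_or_eq with h | h
    · exact hp _ _ _ _ h hzw
    · rw [hpi h]
      exact (by unfold secondDiff; ring : secondDiff M x x z w = 0).ge
  have h2 : 0 ≤ secondDiff M y y' z w := by
    rcases hy.lt_or_eq with h | h
    · exact hp _ _ _ _ h hzw
    · rw [hpi h]
      exact (by unfold secondDiff; ring : secondDiff M y' y' z w = 0).ge
  unfold secondDiff at *
  linarith

lemma exists_oriented (hpi : p.Injective) {x y z w : α} (h : secondDiff M x y z w ≠ 0) :
    ∃ z' w', p z' < p w' ∧ secondDiff M x y z' w' ≠ 0 := by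
  have hzw : z ≠ w := by
    rintro rfl
    exact h (by unfold secondDiff; ring)
  rcases lt_or_gt_of_ne (hpi.ne hzw) with a | a
  · exact ⟨z, w, a, h⟩
  · refine ⟨w, z, a, fun h' => h ?_⟩
    unfold secondDiff at *
    linarith

lemma RankMonge.agree_rows_of_lt (hp : RankMonge M p) (hq : RankMonge M q)
    (hpi : p.Injective) (hqi : q.Injective) {x y z w x' y' z' w' : α}
    (h : secondDiff M x y z w ≠ 0) (h' : secondDiff M x' y' z' w' ≠ 0)
    (hxy : p x < p y) (hxy' : p x' < p y') :
    (p x < p y ↔ q x < q y) ↔ (p x' < p y' ↔ q x' < q y') := by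
  obtain ⟨z, w, hzw, h⟩ := exists_oriented hpi h
  obtain ⟨z', w', hzw', h'⟩ := exists_oriented hpi h'
  obtain ⟨a, ha, ha'⟩ : ∃ a, p a ≤ p x ∧ p a ≤ p x' := by
    rcases le_total (p x) (p x') with c | c
    exacts [⟨x, le_rfl, c⟩, ⟨x', c, le_rfl⟩]
  obtain ⟨b, hb, hb'⟩ : ∃ b, p y ≤ p b ∧ p y' ≤ p b := by
    rcases le_total (p y) (p y') with c | c
    exacts [⟨y', c, le_rfl⟩, ⟨y, le_rfl, c⟩]
  have e := hp.secondDiff_le hpi ha hb hzw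
  have e' := hp.secondDiff_le hpi ha' hb' hzw'
  have f := lt_of_le_of_ne (hp _ _ _ _ hxy hzw) h.symm
  have f' := lt_of_le_of_ne (hp _ _ _ _ hxy' hzw') h'.symm
  have g := hp.agree_iff hq hpi hqi (f.trans_le e).ne'
  have g' := hp.agree_iff hq hpi hqi (f'.trans_le e').ne'
  rw [hp.agree_iff hq hpi hqi h, hp.agree_iff hq hpi hqi h', ← g, ← g']

lemma agree_swap (hpi : p.Injective) (hqi : q.Injective) {x y : α} (h : x ≠ y) :
    (p x < p y ↔ q x < q y) ↔ (p y < p x ↔ q y < q x) := by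
  rcases lt_or_gt_of_ne (hpi.ne h) with a | a <;>
  rcases lt_or_gt_of_ne (hqi.ne h) with b | b <;>
  simp [a, b, a.not_gt, b.not_gt]

lemma RankMonge.agree_rows (hp : RankMonge M p) (hq : RankMonge M q)
    (hpi : p.Injective) (hqi : q.Injective) {x y z w x' y' z' w' : α}
    (h : secondDiff M x y z w ≠ 0) (h' : secondDiff M x' y' z' w' ≠ 0) :
    (p x < p y ↔ q x < q y) ↔ (p x' < p y' ↔ q x' < q y') := by
  have orient : ∀ {x y z w : α}, secondDiff M x y z w ≠ 0 →
      ∃ a b, p a < p b ∧ secondDiff M a b z w ≠ 0 ∧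
        ((p x < p y ↔ q x < q y) ↔ (p a < p b ↔ q a < q b)) := by
    intro x y z w h
    have hxy : x ≠ y := Separated.ne ⟨z, w, Or.inl h⟩
    rcases lt_or_gt_of_ne (hpi.ne hxy) with a | a
    · exact ⟨x, y, a, h, Iff.rfl⟩
    · refine ⟨y, x, a, fun h' => h ?_, agree_swap hpi hqi hxy⟩
      unfold secondDiff at *
      linarith
  obtain ⟨a, b, hab, e, i⟩ := orient h
  obtain ⟨a', b', hab', e', i'⟩ := orient h'
  rw [i, i']
  exact hp.agree_rows_of_lt hq hpi hqi e e' hab hab'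

lemma RankMonge.exists_row_agree_iff (hp : RankMonge M p) (hq : RankMonge M q)
    (hpi : p.Injective) (hqi : q.Injective) {x y : α} (h : Separated M x y) :
    ∃ a b z w, secondDiff M a b z w ≠ 0 ∧
      ((p x < p y ↔ q x < q y) ↔ (p a < p b ↔ q a < q b)) := by
  obtain ⟨z, w, h | h⟩ := h
  · exact ⟨x, y, z, w, h, Iff.rfl⟩
  · exact ⟨z, w, x, y, h, (hp.agree_iff hq hpi hqi h).symm⟩

/-- Rankings that make `M` a-Monge are determined on separated pairs up to a global reversal. -/
lemma RankMonge.agree_separated (hp : RankMonge M p) (hq : RankMonge M q)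
    (hpi : p.Injective) (hqi : q.Injective) {x y x' y' : α}
    (h : Separated M x y) (h' : Separated M x' y') :
    (p x < p y ↔ q x < q y) ↔ (p x' < p y' ↔ q x' < q y') := by
  obtain ⟨a, b, z, w, e, i⟩ := hp.exists_row_agree_iff hq hpi hqi h
  obtain ⟨a', b', z', w', e', i'⟩ := hp.exists_row_agree_iff hq hpi hqi h'
  rw [i, i']
  exact hp.agree_rows hq hpi hqi e e'

lemma RankMonge.separated_of_row (hp : RankMonge M p) (hpi : p.Injective) {x y z w : α}
    (h : secondDiff M x y z w ≠ 0) (hxy : p x < p y) (t : α) :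
    (∃ z w, secondDiff M x t z w ≠ 0 ∧ p x < p t) ∨
      (∃ z w, secondDiff M t y z w ≠ 0 ∧ p t < p y) := by
  obtain ⟨z, w, hzw, h⟩ := exists_oriented hpi h
  have f := lt_of_le_of_ne (hp _ _ _ _ hxy hzw) h.symm
  by_cases h1 : p t ≤ p x
  · exact Or.inr ⟨z, w, (f.trans_le (hp.secondDiff_le hpi h1 le_rfl hzw)).ne', h1.trans_lt hxy⟩
  by_cases h2 : p y ≤ p t
  · exact Or.inl ⟨z, w, (f.trans_le (hp.secondDiff_le hpi le_rfl h2 hzw)).ne', hxy.trans_le h2⟩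
  by_cases h3 : secondDiff M x t z w = 0
  · refine Or.inr ⟨z, w, fun h4 => h ?_, not_le.mp h2⟩
    unfold secondDiff at *
    linarith
  · exact Or.inl ⟨z, w, h3, not_le.mp h1⟩

/-- A separated pair remains separated from any third index on at least one side. -/
lemma RankMonge.separated_or (hp : RankMonge M p) (hpi : p.Injective) {x y : α}
    (h : Separated M x y) (hxy : p x < p y) (t : α) :
    (Separated M x t ∧ p x < p t) ∨ (Separated M t y ∧ p t < p y) := by
  obtain ⟨z, w, h | h⟩ := h
  · rcases hp.separated_of_row hpi h hxy t with ⟨a, b, e, f⟩ | ⟨a, b, e, f⟩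
    · exact Or.inl ⟨⟨a, b, Or.inl e⟩, f⟩
    · exact Or.inr ⟨⟨a, b, Or.inl e⟩, f⟩
  · have conv : ∀ a b c d, secondDiff (fun x y => M y x) a b c d = secondDiff M c d a b := by
      intro a b c d
      unfold secondDiff
      ring
    have h' : secondDiff (fun x y => M y x) x y z w ≠ 0 := by rwa [conv]
    rcases hp.transpose.separated_of_row hpi h' hxy t with ⟨a, b, e, f⟩ | ⟨a, b, e, f⟩
    · exact Or.inl ⟨⟨a, b, Or.inr (by rwa [conv] at e)⟩, f⟩
    · exact Or.inr ⟨⟨a, b, Or.inr (by rwa [conv] at e)⟩, f⟩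

end Ranking

lemma Separated.exists_row {α : Type*} {M : α → α → ℝ} {x y : α} (h : Separated M x y) :
    ∃ a b z w, secondDiff M a b z w ≠ 0 := by
  obtain ⟨z, w, h | h⟩ := h
  exacts [⟨_, _, _, _, h⟩, ⟨_, _, _, _, h⟩]

lemma exists_common_ne {α β γ : Type*} {f : α → β} {g : α → γ} {x y u v : α}
    (hf : f x ≠ f y) (hg : g u ≠ g v) : ∃ a b, f a ≠ f b ∧ g a ≠ g b := by
  by_contra! H
  have to_x : ∀ t, g t = g x := by
    intro t
    by_cases ht : f t = f x
    · exact (H t y (ht ▸ hf)).trans (H x y hf).symm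
    · exact H t x ht
  exact hg ((to_x u).trans (to_x v).symm)

/-- Two matrices with nonzero second differences separate a common pair. -/
lemma exists_common_separated {α : Type*} {M N : α → α → ℝ} {x y u v : α}
    (hM : Separated M x y) (hN : Separated N u v) :
    ∃ a b, Separated M a b ∧ Separated N a b := by
  obtain ⟨x, y, z, w, hM⟩ := hM.exists_row
  obtain ⟨u, v, z', w', hN⟩ := hN.exists_row
  obtain ⟨a, b, h1, h2⟩ := exists_common_ne
    (f := fun t => M t z - M t w) (g := fun t => N t z' - N t w') (x := x) (y := y) (u := u)
    (v := v) (fun h => hM (by unfold secondDiff; linarith))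
    (fun h => hN (by unfold secondDiff; linarith))
  refine ⟨a, b, ⟨z, w, Or.inl fun h => h1 ?_⟩, ⟨z', w', Or.inl fun h => h2 ?_⟩⟩ <;>
  · unfold secondDiff at h
    linarith

lemma RankMonge.rev {α : Type*} {n : ℕ} {M : α → α → ℝ} {p : α → Fin n} (hp : RankMonge M p) :
    RankMonge M (fun x => (p x).rev) := by
  intro x y z w hxy hzw
  have := hp y x w z (Fin.rev_lt_rev.mp hxy) (Fin.rev_lt_rev.mp hzw)
  unfold secondDiff at *
  linarith

/-- A strict order on `Fin n` is compatible with the order of some permutation. -/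
lemma exists_perm_not_rel {n : ℕ} (R : Fin n → Fin n → Prop)
    (asymm : ∀ x y, R x y → ¬ R y x) (trans : ∀ x y z, R x y → R y z → R x z) :
    ∃ π : Equiv.Perm (Fin n), ∀ a b, a < b → ¬ R (π b) (π a) := by
  classical
  let f : Fin n → ℕ := fun x => (Finset.univ.filter fun y => R y x).card
  refine ⟨Tuple.sort f, fun a b hab hR => ?_⟩
  have hle : f (Tuple.sort f a) ≤ f (Tuple.sort f b) := Tuple.monotone_sort f hab.le
  refine hle.not_gt (Finset.card_lt_card ?_)
  rw [Finset.ssubset_iff_of_subset]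
  · exact ⟨Tuple.sort f b, by simpa using hR, by simpa using fun h => asymm _ _ h h⟩
  · intro y hy
    simp only [Finset.mem_filter, Finset.mem_univ, true_and] at hy ⊢
    exact trans _ _ _ hy hR

/-- If no permutation of `{0,…,n−1}` is simultaneously an a-Monge
permutation for all matrices of a family `M₁,…,Mₘ`, then some subfamily of at most
`3` of the matrices already admits no common a-Monge permutation. -/
theorem no_common_aMonge_perm_three_witness
    {m n : ℕ} (M : Fin m → Fin n → Fin n → ℝ)
    (h : ¬ ∃ π : Equiv.Perm (Fin n),
          ∀ i : Fin m, AMonge (fun a b => M i (π a) (π b))) :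
    ∃ S : Finset (Fin m), S.card ≤ 3 ∧
      ¬ ∃ π : Equiv.Perm (Fin n),
          ∀ i ∈ S, AMonge (fun a b => M i (π a) (π b)) := by
  by_contra! H
  simp only [aMonge_perm_iff] at h H
  by_cases hsep : ∃ o a b, Separated (M o) a b
  swap
  · refine h ⟨1, fun i x y z w _ _ => ?_⟩
    by_contra hlt
    exact hsep ⟨i, x, y, z, w, Or.inl fun h0 => hlt h0.ge⟩
  obtain ⟨o, a, b, hab⟩ := hsep
  let Good (i : Fin m) (p : Fin n → Fin n) : Prop :=
    p.Injective ∧ RankMonge (M o) p ∧ RankMonge (M i) p ∧ p a < p b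
  have common : ∀ i j, ∃ p, Good i p ∧ Good j p := by
    intro i j
    obtain ⟨π, hπ⟩ := H {o, i, j} Finset.card_le_three
    have h1 := hπ o (by simp)
    have h2 := hπ i (by simp)
    have h3 := hπ j (by simp)
    rcases lt_or_gt_of_ne (π.symm.injective.ne hab.ne) with c | c
    · exact ⟨_, ⟨π.symm.injective, h1, h2, c⟩, ⟨π.symm.injective, h1, h3, c⟩⟩
    · have hinj := Fin.rev_injective.comp π.symm.injective
      exact ⟨_, ⟨hinj, h1.rev, h2.rev, Fin.rev_lt_rev.mpr c⟩,
        ⟨hinj, h1.rev, h3.rev, Fin.rev_lt_rev.mpr c⟩⟩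
  have rigid : ∀ i p q x y, Good i p → Good i q → Separated (M i) x y →
      p x < p y → q x < q y := by
    rintro i p q x y ⟨hpi, hpo, hp, hpab⟩ ⟨hqi, hqo, hq, hqab⟩ hxy
    obtain ⟨c, d, hc, hd⟩ := exists_common_separated hab hxy
    have h1 := hpo.agree_separated hqo hpi hqi hab hc
    have h2 := hp.agree_separated hq hpi hqi hxy hd
    tauto
  let R (x y : Fin n) : Prop := ∃ i p, Good i p ∧ Separated (M i) x y ∧ p x < p y
  have asymm : ∀ x y, R x y → ¬ R y x := by
    rintro x y ⟨i, p, hp, hs, hxy⟩ ⟨j, q, hq, hs', hyx⟩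
    obtain ⟨r, hri, hrj⟩ := common i j
    exact lt_asymm (rigid i p r x y hp hri hs hxy) (rigid j q r y x hq hrj hs' hyx)
  have trans : ∀ x y z, R x y → R y z → R x z := by
    rintro x y z ⟨i, p, hp, hs, hxy⟩ hyz
    rcases hp.2.2.1.separated_or hp.1 hs hxy z with ⟨e, f⟩ | ⟨e, f⟩
    · exact ⟨i, p, hp, e, f⟩
    · exact absurd ⟨i, p, hp, e, f⟩ (asymm _ _ hyz)
  obtain ⟨π, hπ⟩ := exists_perm_not_rel R asymm trans
  refine h ⟨π, fun i x y z w hxy hzw => ?_⟩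
  by_contra hlt
  have hne : secondDiff (M i) x y z w ≠ 0 := fun h0 => hlt h0.ge
  obtain ⟨p, hp, -⟩ := common i i
  have orient : ∀ u v, Separated (M i) u v → π.symm u < π.symm v → p u < p v := by
    intro u v hs huv
    rcases lt_or_gt_of_ne (hp.1.ne hs.ne) with c | c
    · exact c
    · have hR : ¬ R v u := by simpa only [Equiv.apply_symm_apply] using hπ _ _ huv
      exact absurd ⟨i, p, hp, hs.symm, c⟩ hR
  exact hlt (hp.2.2.1 x y z w (orient x y ⟨z, w, Or.inl hne⟩ hxy)
    (orient z w ⟨x, y, Or.inr hne⟩ hzw))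
end

section
/- Let N be a 3×3 real matrix (indexed by {0,1,2}) such that Δ(i,j) := N(i,i) + N(j,j) − N(i,j) − N(j,i) = 0 for every pair of indices i, j. Then either N is not a permuted a-Monge matrix, or N is a sum matrix, i.e., there exist real vectors u, v with N(s,t) = u_s + v_t for all s, t. -/
/-- A 3×3 a-Monge matrix with vanishing `Δ` is determined by its first row and column. -/
lemma AMonge.eq_first_col_add_first_row {P : Fin 3 → Fin 3 → ℝ} (hP : AMonge P)
    (hΔ : ∀ i j : Fin 3, P i i + P j j - P i j - P j i = 0) (s t : Fin 3) :
    P s t = P s 0 + (P 0 t - P 0 0) := by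
  have upper := hP 0 1 1 2 (by decide) (by decide)
  have lower := hP 1 2 0 1 (by decide) (by decide)
  have h01 := hΔ 0 1
  have h02 := hΔ 0 2
  have h12 := hΔ 1 2
  fin_cases s <;> fin_cases t <;> simp <;> linarith

/-- If a 3×3 real matrix `N` satisfies
`Δ(i,j) = N i i + N j j − N i j − N j i = 0` for all `i, j`, then either `N` is not
a permuted a-Monge matrix, or `N` is a sum matrix (`N s t = u s + v t`). -/
theorem zero_delta_bad_or_sum
    (N : Fin 3 → Fin 3 → ℝ)
    (hΔ : ∀ i j : Fin 3, N i i + N j j - N i j - N j i = 0) :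
    ¬ PermAMonge N ∨ ∃ u v : Fin 3 → ℝ, ∀ s t, N s t = u s + v t := by
  refine not_or_of_imp ?_
  rintro ⟨π, hπ⟩
  refine ⟨fun s => N s (π 0), fun t => N (π 0) t - N (π 0) (π 0), fun s t => ?_⟩
  simpa using hπ.eq_first_col_add_first_row (fun i j => hΔ (π i) (π j)) (π.symm s) (π.symm t)
end
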